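/- Let a be a positive integer and let G be a graph that has a Hamiltonian path. If G admits a varied path representation with adhesion less than a whose underlying path has at least ℓ nodes, then G has an induced path of order at least (1/3)·ℓ^(1/(2a)). -/

import Mathlib

open SimpleGraph Real

/-- `G` has a (not necessarily induced) path on `n` vertices. -/
def HasPathOfOrder {V : Type*} (G : SimpleGraph V) (n : ℕ) : Prop :=
  ∃ (u v : V) (p : G.Walk u v), p.IsPath ∧ p.length + 1 = n

/-- `G` has a Hamiltonian path. -/
def HasHamPath {V : Type*} (G : SimpleGraph V) : Prop :=
  ∃ (u v : V) (p : G.Walk u v), p.IsPath ∧ ∀ w, w ∈ p.support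

/-- `G` has an induced path on at least `r` vertices (an induced subgraph isomorphic to a
path graph on `m ≥ r` vertices). -/
def HasInducedPathGE {V : Type*} (G : SimpleGraph V) (r : ℝ) : Prop :=
  ∃ m : ℕ, r ≤ (m : ℝ) ∧ Nonempty (pathGraph m ↪g G)

/-- A tree (or path) representation of `G` over the graph `T`: every vertex `v` of `G` has a
nonempty connected model `model v ⊆ V(T)`, and models of adjacent vertices intersect. -/
structure TreeRep {V N : Type*} (G : SimpleGraph V) (T : SimpleGraph N) where
  model : V → Set N
  model_connected : ∀ v, (T.induce (model v)).Connected
  adj_meet : ∀ ⦃u v⦄, G.Adj u v → (model u ∩ model v).Nonempty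

namespace TreeRep

variable {V N : Type*} {G : SimpleGraph V} {T : SimpleGraph N}

/-- The bag of the representation at a node `t`. -/
def bag (R : TreeRep G T) (t : N) : Set V := {v | t ∈ R.model v}

/-- The representation has width less than `k`, i.e. all bags have at most `k` vertices. -/
def WidthLT (R : TreeRep G T) (k : ℕ) : Prop := ∀ t, (R.bag t).ncard ≤ k

/-- The representation has width at most `k`, i.e. all bags have at most `k + 1` vertices. -/
def WidthLE (R : TreeRep G T) (k : ℕ) : Prop := ∀ t, (R.bag t).ncard ≤ k + 1

/-- The weight of a path `p` of `T`: the number of vertices of `G` whose model meets `p`. -/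
noncomputable def pathWeight (R : TreeRep G T) {x y : N} (p : T.Walk x y) : ℕ :=
  {v : V | ∃ t ∈ p.support, t ∈ R.model v}.ncard

/-- A representation is varied if no bag is contained in the bag at a neighboring node. -/
def Varied (R : TreeRep G T) : Prop := ∀ ⦃t t'⦄, T.Adj t t' → ¬ R.bag t ⊆ R.bag t'

/-- The representation has adhesion less than `a`: the adhesion set of every edge of `T`
has fewer than `a` vertices. -/
def AdhesionLT (R : TreeRep G T) (a : ℕ) : Prop :=
  ∀ ⦃t t'⦄, T.Adj t t' → (R.bag t ∩ R.bag t').ncard < a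

/-- The torso of the representation at a node `t`: the subgraph induced on the bag at `t`
together with all edges inside adhesion sets of edges of `T` incident to `t`. -/
def torso (R : TreeRep G T) (t : N) : SimpleGraph (R.bag t) :=
  SimpleGraph.fromRel (fun u v =>
    G.Adj u v ∨ ∃ t', T.Adj t t' ∧ (u : V) ∈ R.bag t' ∧ (v : V) ∈ R.bag t')

end TreeRep

/-- `G` has pathwidth less than `k`: it has a representation over a path all of whose bags
have at most `k` vertices. -/
def PathwidthLT {V : Type*} (G : SimpleGraph V) (k : ℕ) : Prop :=
  ∃ (m : ℕ) (R : TreeRep G (pathGraph (m + 1))), R.WidthLT k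

/-- `G` has treewidth less than `k`: it has a representation over a tree all of whose bags
have at most `k` vertices. -/
def TreewidthLT {V : Type*} (G : SimpleGraph V) (k : ℕ) : Prop :=
  ∃ (N : Type) (_ : Fintype N) (T : SimpleGraph N), T.IsTree ∧
    ∃ R : TreeRep G T, R.WidthLT k

/-- `G` has treewidth at most `k`. -/
def TreewidthLE {V : Type*} (G : SimpleGraph V) (k : ℕ) : Prop :=
  ∃ (N : Type) (_ : Fintype N) (T : SimpleGraph N), T.IsTree ∧
    ∃ R : TreeRep G T, R.WidthLE k

/-- A leaf of a graph: a vertex with at most one neighbor. -/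
def IsLeafNode {N : Type*} (T : SimpleGraph N) (l : N) : Prop :=
  (T.neighborSet l).Subsingleton

/-- `H` is obtained from `G` by a sequence of edge contractions: there is a surjection
from `V(G)` onto `V(H)` with connected fibers inducing the adjacency of `H`. -/
def IsContraction {W V : Type*} (H : SimpleGraph W) (G : SimpleGraph V) : Prop :=
  ∃ f : V → W, Function.Surjective f ∧
    (∀ w : W, (G.induce (f ⁻¹' {w})).Connected) ∧
    (∀ x y : W, H.Adj x y ↔ x ≠ y ∧ ∃ u v : V, f u = x ∧ f v = y ∧ G.Adj u v)

/-- `G` is an interval graph: the intersection graph of a family of real intervals. -/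
def IsIntervalGraph {V : Type*} (G : SimpleGraph V) : Prop :=
  ∃ l r : V → ℝ, (∀ v, l v ≤ r v) ∧
    ∀ u v : V, G.Adj u v ↔ u ≠ v ∧ max (l u) (l v) ≤ min (r u) (r v)

/-- The internal vertices of a walk: vertices of the walk distinct from its two endpoints. -/
def WalkInternal {V : Type*} {G : SimpleGraph V} {x y : V} (p : G.Walk x y) : Set V :=
  {w | w ∈ p.support ∧ w ≠ x ∧ w ≠ y}

/-- `H` is a topological minor of `G`: there are branch vertices `φ u` for `u ∈ V(H)` and
internally disjoint paths of `G` joining them, one for each edge of `H`. -/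
def IsTopMinor {W V : Type*} (H : SimpleGraph W) (G : SimpleGraph V) : Prop :=
  ∃ (φ : W ↪ V) (P : ∀ ⦃u v : W⦄, H.Adj u v → G.Walk (φ u) (φ v)),
    (∀ ⦃u v⦄ (h : H.Adj u v), (P h).IsPath) ∧
    (∀ ⦃u v⦄ (h : H.Adj u v), P h.symm = (P h).reverse) ∧
    (∀ ⦃u v⦄ (h : H.Adj u v), ∀ w ∈ WalkInternal (P h), w ∉ Set.range φ) ∧
    (∀ ⦃u v u' v'⦄ (h : H.Adj u v) (h' : H.Adj u' v'), s(u, v) ≠ s(u', v') →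
      ∀ w ∈ WalkInternal (P h), w ∉ WalkInternal (P h'))

/-- `H` is (an isomorphic copy of) a subgraph of `G`. -/
def ContainsSubgraphCopy {A B : Type*} (H : SimpleGraph A) (G : SimpleGraph B) : Prop :=
  ∃ f : A ↪ B, ∀ u v : A, H.Adj u v → G.Adj (f u) (f v)

/-- `G` is `k`-degenerate: every (induced) subgraph has a vertex of degree at most `k`. -/
def Degenerate {V : Type*} (G : SimpleGraph V) (k : ℕ) : Prop :=
  ∀ s : Set V, s.Nonempty → ∃ v ∈ s, {w | w ∈ s ∧ G.Adj v w}.ncard ≤ k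

/-- The cycle on `ZMod m` (for `m ≥ 3` this is the cycle graph on `m` vertices). -/
def ringGraph (m : ℕ) : SimpleGraph (ZMod m) :=
  SimpleGraph.fromRel (fun i j => j = i + 1)

/-- Cliquewidth expressions with labels in `Fin k`. -/
inductive CWExpr (k : ℕ) where
  | vertex (l : Fin k) : CWExpr k
  | union (e₁ e₂ : CWExpr k) : CWExpr k
  | addEdges (i j : Fin k) (hij : i ≠ j) (e : CWExpr k) : CWExpr k
  | relabel (f : Fin k → Fin k) (e : CWExpr k) : CWExpr k

namespace CWExpr

variable {k : ℕ}

/-- The vertex set of the graph described by a cliquewidth expression. -/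
def verts : CWExpr k → Type
  | vertex _ => Unit
  | union e₁ e₂ => e₁.verts ⊕ e₂.verts
  | addEdges _ _ _ e => e.verts
  | relabel _ e => e.verts

/-- The labelling of the vertices described by a cliquewidth expression. -/
def label : (e : CWExpr k) → e.verts → Fin k
  | vertex l, _ => l
  | union e₁ _, Sum.inl x => e₁.label x
  | union _ e₂, Sum.inr x => e₂.label x
  | addEdges _ _ _ e, x => e.label x
  | relabel f e, x => f (e.label x)

/-- The adjacency relation described by a cliquewidth expression. -/
def adj : (e : CWExpr k) → e.verts → e.verts → Prop
  | vertex _, _, _ => False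
  | union e₁ _, Sum.inl x, Sum.inl y => e₁.adj x y
  | union _ e₂, Sum.inr x, Sum.inr y => e₂.adj x y
  | union _ _, _, _ => False
  | addEdges i j _ e, x, y =>
      e.adj x y ∨ (e.label x = i ∧ e.label y = j) ∨ (e.label x = j ∧ e.label y = i)
  | relabel _ e, x, y => e.adj x y

/-- The graph described by a cliquewidth expression. -/
def graph (e : CWExpr k) : SimpleGraph e.verts := SimpleGraph.fromRel e.adj

end CWExpr

/-- `G` has cliquewidth at most `k`: it is isomorphic to the graph of a cliquewidth
expression with at most `k` labels. -/
def CliquewidthLE {V : Type*} (G : SimpleGraph V) (k : ℕ) : Prop :=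
  ∃ e : CWExpr k, Nonempty (G ≃g e.graph)

/-- `G` has `(k, Δ)`-almost bounded degree: removing at most `k` vertices yields a graph of
maximum degree at most `Δ`. -/
def AlmostBoundedDegree {V : Type*} (G : SimpleGraph V) (k Δ : ℕ) : Prop :=
  ∃ X : Set V, X.ncard ≤ k ∧ ∀ v ∉ X, {w | w ∉ X ∧ G.Adj v w}.ncard ≤ Δ

/-- An embedding scheme for `H`: a rotation system (a permutation of the darts that is,
around each vertex, a single cycle on the darts leaving that vertex) together with a
signature on the edges. -/
structure EmbScheme {W : Type*} (H : SimpleGraph W) where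
  rot : Equiv.Perm H.Dart
  rot_fst : ∀ d : H.Dart, (rot d).fst = d.fst
  rot_cyclic : ∀ d d' : H.Dart, d.fst = d'.fst → ∃ n : ℕ, (rot ^ n) d = d'
  sign : Sym2 W → Bool

namespace EmbScheme

variable {W : Type*} {H : SimpleGraph W}

/-- The face-tracing step of an embedding scheme, acting on darts with a direction. -/
def faceStep (S : EmbScheme H) : H.Dart × Bool → H.Dart × Bool :=
  fun p =>
    let s' := xor p.2 (S.sign p.1.edge)
    ((if s' then S.rot.symm p.1.symm else S.rot p.1.symm), s')

/-- The number of orbits of a function. -/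
noncomputable def orbitCount {α : Type*} (f : α → α) : ℕ :=
  Nat.card (Quotient (Relation.EqvGen.setoid (fun x y => f x = y)))

/-- The scheme describes an embedding of `H` in a surface of Euler genus at most `g`.
Isolated vertices each bound one face; every other face is traced twice by `faceStep`,
so the number of faces is `orbitCount (faceStep) / 2` plus the number of isolated
vertices, and the Euler genus of the embedding is `2c - |V| + |E| - F`. -/
def GenusLE (S : EmbScheme H) (g : ℕ) : Prop :=
  2 * Nat.card H.ConnectedComponent + Nat.card H.edgeSet ≤
    g + Nat.card W +
      (orbitCount S.faceStep / 2 + Nat.card {v : W | ∀ w, ¬ H.Adj v w})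

/-- The cycle `e 0, e 1, …, e (m-1)` is a facial cycle of the embedding scheme `S`:
its consecutive darts are consecutive in a face traversal. -/
def IsFacialCycle (S : EmbScheme H) {m : ℕ} (e : ZMod m → W)
    (hadj : ∀ x : ZMod m, H.Adj (e x) (e (x + 1))) : Prop :=
  ∃ b : ZMod m → Bool, ∀ x : ZMod m,
    S.faceStep (⟨(e x, e (x + 1)), hadj x⟩, b x) =
      (⟨(e (x + 1), e (x + 1 + 1)), hadj (x + 1)⟩, b (x + 1))

end EmbScheme

/-- `Hs` has a `C`-vortex of width less than `k`, where `C` is the cycle of `G₀` given by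
`e`: the vertices common to `Hs` and `G₀` are exactly those of `C`, and `Hs` has a cycle
representation over `C` in which the model of each vertex of `C` contains that vertex and
every bag has at most `k` vertices. -/
def IsVortex {V : Type*} {G : SimpleGraph V} (Hs G₀ : G.Subgraph) {m : ℕ}
    (e : ZMod m → G₀.verts) (k : ℕ) : Prop :=
  Hs.verts ∩ G₀.verts = Subtype.val '' Set.range e ∧
  ∃ model : Hs.verts → Set (ZMod m),
    (∀ v, ((ringGraph m).induce (model v)).Connected) ∧
    (∀ (x : ZMod m) (v : Hs.verts), (e x : V) = (v : V) → x ∈ model v) ∧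
    (∀ ⦃u v⦄, Hs.coe.Adj u v → (model u ∩ model v).Nonempty) ∧
    (∀ t : ZMod m, {v : Hs.verts | t ∈ model v}.ncard ≤ k)

/-- `G` is `(g, p, a, k)`-almost-embeddable. -/
def AlmostEmbeddable {V : Type*} (G : SimpleGraph V) (g p a k : ℕ) : Prop :=
  ∃ A : Set V, A.ncard ≤ a ∧
  ∃ s : ℕ, s ≤ p ∧
  ∃ (G₀ : G.Subgraph) (Gv : Fin s → G.Subgraph),
    (G₀ ⊔ ⨆ i, Gv i) = (⊤ : G.Subgraph).deleteVerts A ∧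
    (∀ i j, i ≠ j → Disjoint (Gv i).verts (Gv j).verts) ∧
    ∃ S : EmbScheme G₀.coe, S.GenusLE g ∧
    ∃ (m : Fin s → ℕ) (e : ∀ i, ZMod (m i) → G₀.verts)
      (hadj : ∀ i x, G₀.coe.Adj (e i x) (e i (x + 1))),
      (∀ i, 3 ≤ m i) ∧
      (∀ i, Function.Injective (e i)) ∧
      (∀ i, S.IsFacialCycle (e i) (hadj i)) ∧
      (∀ i j, i ≠ j → Disjoint (Set.range (e i)) (Set.range (e j))) ∧
      (∀ i, IsVortex (Gv i) G₀ (e i) k)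

/-!
Order the vertices along the Hamiltonian path and let `k` be the largest order of an induced path.
Call an interval `S` of nodes homogeneous for a set `X` of vertices if every vertex of `X` spans `S`
and every component of the Hamiltonian path minus `X` either spans `S` or avoids it. As the
representation is varied, two neighbouring nodes of `S` are separated by a vertex outside `X`, whose
component `C` therefore spans `S`. A shortest path of `G[C]` between vertices met at the two ends
of `S` has at most `k` vertices and covers `S`, so one of them, `v`, covers a `1 / k` fraction
of `S`. Deleting `v` replaces `C` by two pieces, and each of them cuts an interval into at most
three intervals that it spans or avoids; so some subinterval with a `1 / (9 * k)` fraction of the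
nodes is homogeneous for `X ∪ {v}`. A path with more than `(9 * k) ^ a` nodes would survive `a`
such steps and leave two adjacent nodes sharing `a` vertices. Hence `ℓ ^ (1 / a) ≤ 9 * k`, and
`k ≥ ℓ ^ (1 / a) / 9` is the square of the claimed bound.
-/

section Order

variable {α : Type*} [LinearOrder α] {S T : Set α}

theorem ordConnectedComponent_sdiff_singleton (s : Set α) (v x : α) :
    (s \ {v}).ordConnectedComponent x = ∅ ∨
    (s \ {v}).ordConnectedComponent x = s.ordConnectedComponent x ∨
    (s \ {v}).ordConnectedComponent x = s.ordConnectedComponent v ∩ Set.Iio v ∨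
    (s \ {v}).ordConnectedComponent x = s.ordConnectedComponent v ∩ Set.Ioi v := by
  by_cases hv : v ∈ s.ordConnectedComponent x
  · have hmem (y : α) : y ∈ (s \ {v}).ordConnectedComponent x ↔
        y ∈ s.ordConnectedComponent v ∧ v ∉ Set.uIcc x y := by
      rw [← Set.ordConnectedComponent_eq hv, Set.mem_ordConnectedComponent,
        Set.mem_ordConnectedComponent, Set.subset_sdiff, Set.disjoint_singleton_right]
    rcases lt_trichotomy x v with hxv | rfl | hvx
    · refine .inr (.inr (.inl (Set.ext fun y => ?_)))
      simp only [hmem, Set.mem_uIcc, Set.mem_inter_iff, Set.mem_Iio]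
      grind
    · exact .inl (by simp)
    · refine .inr (.inr (.inr (Set.ext fun y => ?_)))
      simp only [hmem, Set.mem_uIcc, Set.mem_inter_iff, Set.mem_Ioi]
      grind
  · refine .inr (.inl (Set.ext fun y => ?_))
    rw [Set.mem_ordConnectedComponent, Set.mem_ordConnectedComponent, Set.subset_sdiff,
      Set.disjoint_singleton_right, and_iff_left_iff_imp]
    exact fun hy hvy => hv ((Set.uIcc_subset_uIcc_left hvy).trans hy)

theorem exists_covBy_of_ordConnected [IsStronglyAtomic α] (hS : S.OrdConnected)
    (hnt : S.Nontrivial) : ∃ s ∈ S, ∃ t ∈ S, s ⋖ t := by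
  obtain ⟨s, hs, u, hu, hsu⟩ := hnt.exists_lt
  obtain ⟨t, hst, htu⟩ := exists_covBy_le_of_lt hsu
  exact ⟨s, hs, t, hS.out hs hu ⟨hst.le, htu⟩, hst⟩

theorem exists_ordConnected_subset_or_disjoint (hS : S.OrdConnected) (hT : T.OrdConnected)
    {M : ℕ} (hM : 3 * M < S.ncard) :
    ∃ S' ⊆ S, S'.OrdConnected ∧ M < S'.ncard ∧ (S' ⊆ T ∨ Disjoint S' T) := by
  have hfin : S.Finite := Set.finite_of_ncard_pos (by omega)
  set L := ⋂ t ∈ T, Set.Iio t with hL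
  set U := ⋂ t ∈ T, Set.Ioi t with hU
  have hLo : L.OrdConnected := Set.ordConnected_biInter fun _ _ => Set.ordConnected_Iio
  have hUo : U.OrdConnected := Set.ordConnected_biInter fun _ _ => Set.ordConnected_Ioi
  have hLT : Disjoint L T := Set.disjoint_left.2 fun t htL htT =>
    lt_irrefl t (Set.mem_iInter₂.1 htL t htT)
  have hUT : Disjoint U T := Set.disjoint_left.2 fun t htU htT =>
    lt_irrefl t (Set.mem_iInter₂.1 htU t htT)
  have hcover : S ⊆ S ∩ T ∪ S ∩ L ∪ S ∩ U := by
    intro s hs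
    by_contra hsTLU
    simp only [hL, hU, Set.mem_union, Set.mem_inter_iff, hs, true_and, Set.mem_iInter₂,
      Set.mem_Iio, Set.mem_Ioi, not_or, not_forall, not_lt] at hsTLU
    obtain ⟨⟨hsT, t, ht, hts⟩, u, hu, hsu⟩ := hsTLU
    exact hsT (hT.out ht hu ⟨hts, hsu⟩)
  have hcard : S.ncard ≤ (S ∩ T).ncard + (S ∩ L).ncard + (S ∩ U).ncard :=
    (Set.ncard_le_ncard hcover
      (((hfin.inter_of_left T).union (hfin.inter_of_left L)).union (hfin.inter_of_left U))).trans <|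
      (Set.ncard_union_le _ _).trans (by gcongr; exact Set.ncard_union_le _ _)
  obtain h | h | h : M < (S ∩ T).ncard ∨ M < (S ∩ L).ncard ∨ M < (S ∩ U).ncard := by omega
  · exact ⟨_, Set.inter_subset_left, hS.inter hT, h, .inl Set.inter_subset_right⟩
  · exact ⟨_, Set.inter_subset_left, hS.inter hLo, h, .inr (hLT.mono_left Set.inter_subset_right)⟩
  · exact ⟨_, Set.inter_subset_left, hS.inter hUo, h, .inr (hUT.mono_left Set.inter_subset_right)⟩

theorem ordConnected_of_preconnected_induce_hasse (h : ((hasse α).induce S).Preconnected) :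
    S.OrdConnected := by
  refine ⟨fun a ha b hb u hu => ?_⟩
  by_contra huS
  have hne (s : S) : (s : α) ≠ u := fun e => huS (e ▸ s.2)
  obtain ⟨p⟩ := h ⟨a, ha⟩ ⟨b, hb⟩
  obtain ⟨d, -, hd₁, hd₂⟩ := p.exists_boundary_dart {s | (s : α) < u}
    (hu.1.lt_of_ne (hne ⟨a, ha⟩)) hu.2.not_gt
  have hd₁ : (d.fst : α) < u := hd₁
  have hd₂ : u < (d.snd : α) := (not_lt.1 hd₂).lt_of_ne' (hne d.snd)
  obtain hcov | hcov := d.adj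
  · exact hcov.2 hd₁ hd₂
  · exact hcov.lt.not_gt (hd₁.trans hd₂)

theorem preconnected_induce_of_hasse_le [SuccOrder α] [IsSuccArchimedean α] {G : SimpleGraph α}
    (hG : hasse α ≤ G) (hS : S.OrdConnected) : (G.induce S).Preconnected := by
  refine (hasse_preconnected_of_succ S).mono fun s t hst => hG ?_
  have hrange : (Set.range (OrderEmbedding.subtype (· ∈ S))).OrdConnected := by
    simpa using hS
  exact hst.imp (CovBy.image _ · hrange) (CovBy.image _ · hrange)

end Order

section InducedPath

variable {V : Type*} {G : SimpleGraph V} {u v : V}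

/-- The set of orders of induced paths of `G`. -/
def inducedPathOrders (G : SimpleGraph V) : Set ℕ := {j | Nonempty (pathGraph j ↪g G)}

theorem dist_getVert_of_length_eq_dist {p : G.Walk u v} (hp : p.length = G.dist u v) {i : ℕ}
    (hi : i ≤ p.length) : G.dist u (p.getVert i) = i := by
  rw [← length_eq_dist_of_subwalk hp (p.isSubwalk_take i), Walk.take_length, min_eq_left hi]

theorem length_add_one_mem_inducedPathOrders {p : G.Walk u v} (hp : p.length = G.dist u v) :
    p.length + 1 ∈ inducedPathOrders G := by
  have hdist (i : Fin (p.length + 1)) : G.dist u (p.getVert i) = i :=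
    dist_getVert_of_length_eq_dist hp (Nat.lt_succ_iff.1 i.2)
  refine ⟨⟨⟨fun i => p.getVert i, fun i j hij => Fin.ext ?_⟩, fun {i j} => ?_⟩⟩
  · rw [← hdist i, ← hdist j]
    exact congrArg (G.dist u) hij
  · change G.Adj (p.getVert i) (p.getVert j) ↔ _
    rw [pathGraph_adj]
    constructor
    · intro hadj
      have hij : (i : ℕ) ≠ j := fun e => hadj.ne (by rw [e])
      have := hadj.diff_dist_adj (u := u)
      rw [hdist, hdist] at this
      omega
    · rintro (hij | hij)
      · exact hij ▸ p.adj_getVert_succ (by omega)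
      · exact hij ▸ (p.adj_getVert_succ (by omega)).symm

theorem one_mem_inducedPathOrders [Nonempty V] (G : SimpleGraph V) : 1 ∈ inducedPathOrders G :=
  length_add_one_mem_inducedPathOrders (p := (Walk.nil : G.Walk (Classical.arbitrary V) _))
    (dist_self).symm

theorem inducedPathOrders_induce_subset (G : SimpleGraph V) (A : Set V) :
    inducedPathOrders (G.induce A) ⊆ inducedPathOrders G :=
  fun _ ⟨e⟩ => ⟨(Embedding.induce A).comp e⟩

theorem exists_isGreatest_inducedPathOrders [Finite V] (G : SimpleGraph V) :
    ∃ k, IsGreatest (inducedPathOrders G) k := by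
  have hne : (inducedPathOrders G).Nonempty :=
    ⟨0, ⟨⟨Function.Embedding.ofIsEmpty, fun {i} => i.elim0⟩⟩⟩
  have hbdd : BddAbove (inducedPathOrders G) :=
    ⟨Nat.card V, fun j ⟨e⟩ => by simpa using Nat.card_le_card_of_injective e e.injective⟩
  exact ⟨_, Nat.sSup_mem hne hbdd, fun _ hj => le_csSup hbdd hj⟩

theorem HasInducedPathGE.of_sq {r : ℝ} (h : HasInducedPathGE G (r ^ 2)) :
    HasInducedPathGE G r := by
  obtain ⟨m, hm, hG⟩ := h
  have : m ≤ m ^ 2 := Nat.le_self_pow two_ne_zero m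
  exact ⟨m, le_of_sq_le_sq (hm.trans (mod_cast this)) (by positivity), hG⟩

end InducedPath

section HamPath

variable {V : Type*} {G : SimpleGraph V}

theorem HasHamPath.nonempty (h : HasHamPath G) : Nonempty V :=
  let ⟨u, _⟩ := h
  ⟨u⟩

theorem HasHamPath.finite (h : HasHamPath G) : Finite V := by
  classical
  obtain ⟨u, v, p, hp, hmem⟩ := h
  exact (hp.isHamiltonian_of_mem hmem).finite

theorem HasHamPath.exists_linearOrder_hasse_le (h : HasHamPath G) :
    ∃ _ : LinearOrder V, hasse V ≤ G := by
  obtain ⟨u, v, p, hp, hmem⟩ := h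
  have hbij : Function.Bijective fun i : Fin (p.length + 1) => p.getVert i := by
    refine ⟨fun i j hij => Fin.ext <| hp.getVert_injOn (Nat.lt_succ_iff.1 i.2)
      (Nat.lt_succ_iff.1 j.2) hij, fun w => ?_⟩
    obtain ⟨n, rfl, hn⟩ := Walk.mem_support_iff_exists_getVert.1 (hmem w)
    exact ⟨⟨n, Nat.lt_succ_iff.2 hn⟩, rfl⟩
  let f : Fin (p.length + 1) ≃ V := .ofBijective _ hbij
  let _ : LinearOrder V := .lift' f.symm f.symm.injective
  let e : V ≃o Fin (p.length + 1) := ⟨f.symm, Iff.rfl⟩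
  have hadj {x y : V} (hxy : x ⋖ y) : G.Adj x y := by
    have hsucc : (e x : ℕ) + 1 = e y :=
      Nat.covBy_iff_add_one_eq.1 (Fin.covBy_iff.1 ((apply_covBy_apply_iff e).2 hxy))
    have hx : p.getVert (e x) = x := f.apply_symm_apply x
    have hy : p.getVert (e y) = y := f.apply_symm_apply y
    rw [← hx, ← hy, ← hsucc]
    exact p.adj_getVert_succ (by omega)
  exact ⟨inferInstance, fun x y hxy => hxy.elim hadj fun hyx => (hadj hyx).symm⟩

end HamPath

namespace TreeRep

variable {V N : Type*} {G : SimpleGraph V}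

/-- The set of nodes whose bag meets `A`. -/
def trace {T : SimpleGraph N} (R : TreeRep G T) (A : Set V) : Set N := ⋃ v ∈ A, R.model v

theorem trace_univ [Nontrivial N] {T : SimpleGraph N} {R : TreeRep G T} (hT : T.Preconnected)
    (hR : R.Varied) : R.trace Set.univ = Set.univ := by
  refine Set.eq_univ_of_forall fun t => ?_
  obtain ⟨t', htt'⟩ := hT.exists_adj_of_nontrivial t
  obtain ⟨v, hv, -⟩ := Set.not_subset.1 (hR htt')
  exact Set.mem_biUnion (Set.mem_univ v) hv

theorem preconnected_induce_trace_support {T : SimpleGraph N} (R : TreeRep G T) {x y : V}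
    (p : G.Walk x y) : (T.induce (R.trace {v | v ∈ p.support})).Preconnected := by
  induction p with
  | @nil x =>
    have hnil : R.trace {v | v ∈ (Walk.nil : G.Walk x x).support} = R.model x := by
      simp [trace]
    rw [hnil]
    exact (R.model_connected x).preconnected
  | @cons x z y h p ih =>
    have hcons : R.trace {v | v ∈ (Walk.cons h p).support} =
        R.model x ∪ R.trace {v | v ∈ p.support} := by
      simp [trace, Set.iUnion_or, Set.iUnion_union_distrib]
    rw [hcons]
    refine (induce_union_connected (R.model_connected x).preconnected ih ?_).preconnected
    exact (R.adj_meet h).mono (Set.inter_subset_inter_right _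
      (Set.subset_biUnion_of_mem (u := R.model) p.start_mem_support))

section Hasse

variable [LinearOrder N] (R : TreeRep G (hasse N)) {A X : Set V} {S S' : Set N} {v : V} {k M : ℕ}

theorem uIcc_subset_trace_support {x y : V} (p : G.Walk x y) {s t : N} (hs : s ∈ R.model x)
    (ht : t ∈ R.model y) : Set.uIcc s t ⊆ R.trace {v | v ∈ p.support} :=
  (ordConnected_of_preconnected_induce_hasse
    (R.preconnected_induce_trace_support p)).uIcc_subset
    (Set.mem_biUnion p.start_mem_support hs) (Set.mem_biUnion p.end_mem_support ht)

theorem ordConnected_model (v : V) : (R.model v).OrdConnected :=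
  ordConnected_of_preconnected_induce_hasse (R.model_connected v).preconnected

theorem ordConnected_trace (hA : (G.induce A).Preconnected) : (R.trace A).OrdConnected := by
  refine Set.ordConnected_iff_uIcc_subset.2 fun s hs t ht => ?_
  obtain ⟨x, hx, hsx⟩ := Set.mem_iUnion₂.1 hs
  obtain ⟨y, hy, hty⟩ := Set.mem_iUnion₂.1 ht
  obtain ⟨p⟩ := hA ⟨x, hx⟩ ⟨y, hy⟩
  refine (R.uIcc_subset_trace_support (p.map (Embedding.induce A).toHom) hsx hty).trans
    (Set.biUnion_subset_biUnion_left fun v hv => ?_)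
  simp only [Walk.support_map, List.mem_map, Set.mem_ofPred_eq] at hv
  obtain ⟨w, -, rfl⟩ := hv
  exact w.2

theorem ncard_le_mul_of_subset_trace (hA : (G.induce A).Preconnected) (hS : S ⊆ R.trace A)
    (hk : k ∈ upperBounds (inducedPathOrders G)) (hM : ∀ v ∈ A, (S ∩ R.model v).ncard ≤ M) :
    S.ncard ≤ k * M := by
  classical
  obtain hS0 | hSpos := S.ncard.eq_zero_or_pos
  · simp [hS0]
  have hfin := Set.finite_of_ncard_pos hSpos
  have hne := Set.nonempty_of_ncard_ne_zero hSpos.ne'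
  obtain ⟨s, hs, hleast⟩ := S.exists_min_image id hfin hne
  obtain ⟨t, ht, hgreatest⟩ := S.exists_max_image id hfin hne
  obtain ⟨x, hx, hsx⟩ := Set.mem_iUnion₂.1 (hS hs)
  obtain ⟨y, hy, hty⟩ := Set.mem_iUnion₂.1 (hS ht)
  obtain ⟨p, hp⟩ := (hA ⟨x, hx⟩ ⟨y, hy⟩).exists_walk_length_eq_dist
  have hpk : p.length + 1 ≤ k :=
    hk (inducedPathOrders_induce_subset G A (length_add_one_mem_inducedPathOrders hp))
  have hcover : S ⊆ ⋃ w ∈ p.support.toFinset, S ∩ R.model w := by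
    intro u hu
    obtain ⟨_, hw, huw⟩ := Set.mem_iUnion₂.1 <|
      R.uIcc_subset_trace_support (p.map (Embedding.induce A).toHom) hsx hty
        (Set.Icc_subset_uIcc ⟨hleast u hu, hgreatest u hu⟩)
    simp only [Walk.support_map, List.mem_map, Set.mem_ofPred_eq] at hw
    obtain ⟨w, hwp, rfl⟩ := hw
    exact Set.mem_biUnion (List.mem_toFinset.2 hwp) ⟨hu, huw⟩
  calc S.ncard ≤ (⋃ w ∈ p.support.toFinset, S ∩ R.model w).ncard :=
        Set.ncard_le_ncard hcover (Set.Finite.biUnion p.support.toFinset.finite_toSet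
          fun w _ => hfin.inter_of_left _)
    _ ≤ ∑ w ∈ p.support.toFinset, (S ∩ R.model w).ncard := Finset.set_ncard_biUnion_le _ _
    _ ≤ p.support.toFinset.card * M := Finset.sum_le_card_nsmul _ _ _ fun w _ => hM w w.2
    _ ≤ k * M := by
      gcongr
      exact (p.support.toFinset_card_le.trans_eq p.length_support).trans hpk

/-- Every vertex of `X` spans the interval `S` of nodes, and every component of the Hamiltonian path
minus `X` spans `S` or avoids it. The order on `V` is that of the Hamiltonian path, so its
components minus `X` are the order-connected components of `Xᶜ`. -/
structure IsHomogeneous [LinearOrder V] (R : TreeRep G (hasse N)) (X : Set V) (S : Set N) :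
    Prop where
  ordConnected : S.OrdConnected
  subset_model : ∀ v ∈ X, S ⊆ R.model v
  subset_or_disjoint : ∀ x, S ⊆ R.trace (Xᶜ.ordConnectedComponent x) ∨
    Disjoint S (R.trace (Xᶜ.ordConnectedComponent x))

variable {R} [LinearOrder V]

theorem IsHomogeneous.insert_of_subset (h : R.IsHomogeneous X S) (hS' : S'.OrdConnected)
    (hsub : S' ⊆ S ∩ R.model v)
    (hlt : S' ⊆ R.trace (Xᶜ.ordConnectedComponent v ∩ Set.Iio v) ∨
      Disjoint S' (R.trace (Xᶜ.ordConnectedComponent v ∩ Set.Iio v)))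
    (hgt : S' ⊆ R.trace (Xᶜ.ordConnectedComponent v ∩ Set.Ioi v) ∨
      Disjoint S' (R.trace (Xᶜ.ordConnectedComponent v ∩ Set.Ioi v))) :
    R.IsHomogeneous (insert v X) S' := by
  obtain ⟨hS, hv⟩ := Set.subset_inter_iff.1 hsub
  refine ⟨hS', Set.forall_mem_insert.2 ⟨hv, fun w hw => hS.trans (h.subset_model w hw)⟩,
    fun x => ?_⟩
  have hcompl : (insert v X)ᶜ = Xᶜ \ {v} := by grind
  rw [hcompl]
  obtain hx | hx | hx | hx := ordConnectedComponent_sdiff_singleton Xᶜ v x <;> rw [hx]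
  · simp [trace]
  · exact (h.subset_or_disjoint x).imp hS.trans (Disjoint.mono_left hS)
  · exact hlt
  · exact hgt

theorem IsHomogeneous.exists_subset_trace [IsStronglyAtomic N] (h : R.IsHomogeneous X S)
    (hR : R.Varied) (hS : 1 < S.ncard) : ∃ x, S ⊆ R.trace (Xᶜ.ordConnectedComponent x) := by
  obtain ⟨s, hs, t, ht, hst⟩ :=
    exists_covBy_of_ordConnected h.ordConnected (Set.one_lt_ncard_iff_nontrivial_and_finite.1 hS).1
  obtain ⟨x, hxs, hxt⟩ := Set.not_subset.1 (hR (.inl hst : (hasse N).Adj s t))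
  have hxX : x ∈ Xᶜ := fun hxX => hxt (h.subset_model x hxX ht)
  exact ⟨x, (h.subset_or_disjoint x).resolve_right <| Set.not_disjoint_iff.2
    ⟨s, hs, Set.mem_biUnion (Set.self_mem_ordConnectedComponent.2 hxX) hxs⟩⟩

theorem IsHomogeneous.exists_insert [IsStronglyAtomic N] [SuccOrder V] [IsSuccArchimedean V]
    (hG : hasse V ≤ G) (hR : R.Varied) (hk : k ∈ upperBounds (inducedPathOrders G))
    (h : R.IsHomogeneous X S) (hS : 1 < S.ncard) (hM : 9 * k * M < S.ncard) :
    ∃ v ∉ X, ∃ S', R.IsHomogeneous (insert v X) S' ∧ M < S'.ncard := by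
  obtain ⟨x, hx⟩ := h.exists_subset_trace hR hS
  obtain ⟨v, hvx, hv⟩ : ∃ v ∈ Xᶜ.ordConnectedComponent x, 3 * (3 * M) < (S ∩ R.model v).ncard := by
    by_contra! hcon
    have := ncard_le_mul_of_subset_trace R (preconnected_induce_of_hasse_le hG inferInstance)
      hx hk hcon
    linarith
  have hCv : (Xᶜ.ordConnectedComponent v).OrdConnected := inferInstance
  obtain ⟨S₁, hS₁, hS₁o, hS₁c, hlt⟩ := exists_ordConnected_subset_or_disjoint
    (h.ordConnected.inter (R.ordConnected_model v))
    (R.ordConnected_trace (preconnected_induce_of_hasse_le hG (hCv.inter Set.ordConnected_Iio)))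
    hv
  obtain ⟨S₂, hS₂, hS₂o, hS₂c, hgt⟩ := exists_ordConnected_subset_or_disjoint hS₁o
    (R.ordConnected_trace (preconnected_induce_of_hasse_le hG (hCv.inter Set.ordConnected_Ioi)))
    hS₁c
  exact ⟨v, Set.ordConnectedComponent_subset hvx, S₂, h.insert_of_subset hS₂o (hS₂.trans hS₁)
    (hlt.imp hS₂.trans (Disjoint.mono_left hS₂)) hgt, hS₂c⟩

theorem isHomogeneous_empty_univ [Nontrivial N] (hN : (hasse N).Preconnected) (hR : R.Varied) :
    R.IsHomogeneous ∅ Set.univ :=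
  ⟨Set.ordConnected_univ, by simp, by simp [trace_univ hN hR]⟩

theorem exists_isHomogeneous [SuccOrder N] [IsSuccArchimedean N] [SuccOrder V]
    [IsSuccArchimedean V] (hG : hasse V ≤ G) (hR : R.Varied)
    (hk : k ∈ upperBounds (inducedPathOrders G)) (hk₀ : 0 < k) {i j : ℕ}
    (hN : (9 * k) ^ (i + j) < Nat.card N) :
    ∃ X : Finset V, X.card = i ∧ ∃ S, R.IsHomogeneous (X : Set V) S ∧ (9 * k) ^ j < S.ncard := by
  have hpow (n : ℕ) : 1 ≤ (9 * k) ^ n := Nat.one_le_pow _ _ (by positivity)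
  induction i generalizing j with
  | zero =>
    have huniv : (9 * k) ^ j < (Set.univ : Set N).ncard := by simpa using hN
    have hnt : (Set.univ : Set N).Nontrivial :=
      (Set.one_lt_ncard_iff_nontrivial_and_finite.1 ((hpow j).trans_lt huniv)).1
    have := Set.nontrivial_of_nontrivial hnt
    exact ⟨∅, rfl, Set.univ,
      by simpa using isHomogeneous_empty_univ (hasse_preconnected_of_succ N) hR, huniv⟩
  | succ i ih =>
    obtain ⟨X, hX, S, hS, hcard⟩ := ih (j := j + 1) (by rwa [← add_assoc, add_right_comm])
    obtain ⟨v, hv, S', hS', hcard'⟩ := hS.exists_insert hG hR hk ((hpow (j + 1)).trans_lt hcard)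
      (by rwa [← pow_succ'])
    exact ⟨X.cons v hv, by rw [Finset.card_cons, hX], S', by simpa using hS', hcard'⟩

theorem card_le_pow [Finite V] [SuccOrder N] [IsSuccArchimedean N] [SuccOrder V]
    [IsSuccArchimedean V] (hG : hasse V ≤ G) (hR : R.Varied) {a : ℕ} (ha : R.AdhesionLT a)
    (hk : k ∈ upperBounds (inducedPathOrders G)) (hk₀ : 0 < k) :
    Nat.card N ≤ (9 * k) ^ a := by
  by_contra! hN
  obtain ⟨X, rfl, S, hS, hcard⟩ := exists_isHomogeneous (j := 0) hG hR hk hk₀ hN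
  obtain ⟨s, hs, t, ht, hst⟩ := exists_covBy_of_ordConnected hS.ordConnected
    (Set.one_lt_ncard_iff_nontrivial_and_finite.1 (by simpa using hcard)).1
  have hX : (X : Set V) ⊆ R.bag s ∩ R.bag t :=
    fun v hv => ⟨hS.subset_model v hv hs, hS.subset_model v hv ht⟩
  have hlt := ha (.inl hst : (hasse N).Adj s t)
  exact hlt.not_ge (by simpa using Set.ncard_le_ncard hX)

end Hasse

end TreeRep

theorem one_third_mul_rpow_sq {x : ℝ} (hx : 0 ≤ x) (b : ℝ) :
    ((1 / 3 : ℝ) * x ^ (1 / (2 * b))) ^ 2 = (1 / 9 : ℝ) * x ^ (1 / b) := by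
  rw [mul_pow, ← rpow_natCast (x ^ _), ← rpow_mul hx]
  congr 1
  · norm_num
  · congr 1
    push_cast
    field_simp

theorem stmt17_general (a : ℕ) (ha : 0 < a) {V : Type*} (G : SimpleGraph V) (hham : HasHamPath G)
    (ℓ m : ℕ) (R : TreeRep G (pathGraph m)) (hm : ℓ ≤ m) (hvaried : R.Varied)
    (hadh : R.AdhesionLT a) :
    HasInducedPathGE G ((1 / 9 : ℝ) * (ℓ : ℝ) ^ ((1 : ℝ) / a)) := by
  have := hham.finite
  have := hham.nonempty
  obtain ⟨_, hG⟩ := hham.exists_linearOrder_hasse_le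
  let _ : SuccOrder V := .ofLinearWellFoundedLT V
  obtain ⟨k, hk, hkub⟩ := exists_isGreatest_inducedPathOrders G
  have hk₀ : 0 < k := hkub (one_mem_inducedPathOrders G)
  have hcard : Nat.card (Fin m) ≤ (9 * k) ^ a := TreeRep.card_le_pow hG hvaried hadh hkub hk₀
  have hℓ : (ℓ : ℝ) ≤ (9 * k : ℝ) ^ a := mod_cast hm.trans (by simpa using hcard)
  have hroot : (ℓ : ℝ) ^ ((1 : ℝ) / a) ≤ 9 * k := by
    calc (ℓ : ℝ) ^ ((1 : ℝ) / a) ≤ ((9 * k : ℝ) ^ a) ^ ((1 : ℝ) / a) := by gcongr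
      _ = 9 * k := by rw [one_div, pow_rpow_inv_natCast (by positivity) ha.ne']
  exact ⟨k, by linarith, hk⟩

theorem stmt17 (a : ℕ) (ha : 0 < a) {V : Type} [Fintype V] (G : SimpleGraph V)
    (hham : HasHamPath G) (ℓ m : ℕ) (R : TreeRep G (pathGraph m)) (hm : ℓ ≤ m)
    (hvaried : R.Varied) (hadh : R.AdhesionLT a) :
    HasInducedPathGE G ((1 / 3 : ℝ) * (ℓ : ℝ) ^ ((1 : ℝ) / (2 * a))) :=
  .of_sq (one_third_mul_rpow_sq ℓ.cast_nonneg a ▸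
    stmt17_general a ha G hham ℓ m R hm hvaried hadh)
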